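/- Let Π_1 and Π_2 be orthogonal projectors on a finite-dimensional complex Hilbert space, and let 0 ≤ ν ≤ (3−√5)/2. Then Π_1 + Π_2 ⪯ ν·Π_2Π_1Π_2 + (2−ν)·I in the Loewner order. In particular, Π_1 + Π_2 ⪯ (1/3)·Π_2Π_1Π_2 + (5/3)·I. -/

import Mathlib

variable {E : Type*} [NormedAddCommGroup E] [InnerProductSpace ℂ E] [FiniteDimensional ℂ E]

/-- An orthogonal projector: a self-adjoint idempotent operator. -/
def IsProjector (P : E →L[ℂ] E) : Prop := IsSelfAdjoint P ∧ P * P = P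

/-- The Loewner order: `A ⪯ B` iff `B − A` is positive semidefinite. -/
def Loewner (A B : E →L[ℂ] E) : Prop := (B - A).IsPositive

open scoped ComplexOrder in
theorem aux_main (P Q : E →L[ℂ] E) (h1 : IsProjector P) (h2 : IsProjector Q)
    (ν : ℝ) (hc : 0 < 1 - ν) (hd : 0 ≤ (1 - ν) * (2 - ν) - 1) :
    Loewner (P + Q) (((ν : ℂ) • (Q * P * Q)) + ((2 - ν : ℝ) : ℂ) • (1 : E →L[ℂ] E)) := by
  obtain ⟨hP, hPP⟩ := h1
  obtain ⟨hQ, hQQ⟩ := h2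
  unfold Loewner
  have key : ∀ S R : E →L[ℂ] E, IsSelfAdjoint S → IsSelfAdjoint R → R * R = R →
      (S * R * S).IsPositive := by
    intro S R hS hR hRR
    rw [← ContinuousLinearMap.nonneg_iff_isPositive]
    have h := star_mul_self_nonneg (R * S)
    have e : star (R * S) * (R * S) = S * R * S := by
      rw [star_mul, hS.star_eq, hR.star_eq, mul_assoc, ← mul_assoc R R S, hRR, mul_assoc]
    rwa [e] at h
  have h1s : IsSelfAdjoint (1 : E →L[ℂ] E) := IsSelfAdjoint.one _
  have hP' : IsSelfAdjoint (1 - P) := h1s.sub hP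
  have hQ' : IsSelfAdjoint (1 - Q) := h1s.sub hQ
  have hPP' : (1 - P) * (1 - P) = 1 - P := by
    simp [mul_sub, sub_mul, hPP]
  have hT : IsSelfAdjoint (((1 - ν : ℝ) : ℂ) • Q + (1 - Q)) := by
    refine IsSelfAdjoint.add (IsSelfAdjoint.smul ?_ hQ) hQ'
    exact Complex.conj_ofReal _
  have k1 := key _ _ hQ' hP hPP
  have k2 := key _ _ hQ' hP' hPP'
  have k3 := key _ _ hT hP' hPP'
  have nn : ∀ r : ℝ, 0 ≤ r → (0 : ℂ) ≤ (r : ℂ) := fun r hr => by exact_mod_cast hr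
  have tot := (((k1.smul_of_nonneg (nn _ (sq_nonneg (1 - ν)))).add
    (k2.smul_of_nonneg (nn _ hd))).add k3).smul_of_nonneg (nn _ (inv_nonneg.2 hc.le))
  convert tot using 1
  have hc0 : ((1 - ν : ℝ) : ℂ) ≠ 0 := by exact_mod_cast hc.ne'
  rw [Complex.ofReal_inv, eq_inv_smul_iff₀ hc0]
  have hQQ2 : ∀ X, Q * (Q * X) = Q * X := fun X => by rw [← mul_assoc, hQQ]
  simp only [mul_sub, sub_mul, mul_add, add_mul, mul_assoc, smul_mul_assoc, mul_smul_comm,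
    mul_one, one_mul, hQQ, hQQ2]
  push_cast
  module

/-- for orthogonal projectors `Pi1, Pi2` on a finite-dimensional complex Hilbert
space and `0 ≤ ν ≤ (3−√5)/2`, one has `Pi1 + Pi2 ⪯ ν·Pi2Pi1Pi2 + (2−ν)·I`; in particular
`Pi1 + Pi2 ⪯ (1/3)·Pi2Pi1Pi2 + (5/3)·I`. -/
theorem stmt_9 (Pi1 Pi2 : E →L[ℂ] E) (h1 : IsProjector Pi1) (h2 : IsProjector Pi2)
    (ν : ℝ) (hν0 : 0 ≤ ν) (hν1 : ν ≤ (3 - Real.sqrt 5) / 2) :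
    Loewner (Pi1 + Pi2) (((ν : ℂ) • (Pi2 * Pi1 * Pi2)) + ((2 - ν : ℝ) : ℂ) • (1 : E →L[ℂ] E)) ∧
    Loewner (Pi1 + Pi2) (((1 / 3 : ℂ) • (Pi2 * Pi1 * Pi2)) + (5 / 3 : ℂ) • (1 : E →L[ℂ] E)) := by
  have h5 : Real.sqrt 5 ^ 2 = 5 := Real.sq_sqrt (by norm_num)
  have h50 : 2 < Real.sqrt 5 := by
    rw [Real.lt_sqrt] <;> norm_num
  constructor
  · exact aux_main Pi1 Pi2 h1 h2 ν (by linarith) (by nlinarith)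
  · have h := aux_main Pi1 Pi2 h1 h2 (1 / 3) (by norm_num) (by norm_num)
    convert h using 3
    · push_cast; rfl
    · push_cast; norm_num
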